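/- arXiv:2506.03466 — 6 statements merged into one kernel-verified Lean document; each statement's English description precedes it below -/
import Mathlib

section
/- Let b ≥ 1 and let Q ∈ ℝ^{2b×2b} be an orthogonal matrix with Q₁ ∈ ℝ^{b×2b} its first b rows. Suppose P ∈ ℝ^{2b×2b} is a permutation matrix, L ∈ ℝ^{2b×b} is unit lower trapezoidal with every entry bounded in absolute value by 1, U ∈ ℝ^{b×b} is upper triangular, and Q₁ᵀ = Pᵀ L U. Let Q̃₁₁ denote the upper-left b×b block of Q Pᵀ. Then the smallest singular value of Q̃₁₁ satisfies σ_min(Q̃₁₁) ≥ 3√2 · [(3b² + b)(4^b + 6b − 1)]^{−1/2}. -/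
open Matrix

/-- The smallest singular value of a square real matrix `M`, defined as the infimum of
`‖M x‖₂` over Euclidean-unit vectors `x`. -/
noncomputable def sigmaMin {b : ℕ} (M : Matrix (Fin b) (Fin b) ℝ) : ℝ :=
  sInf {r : ℝ | ∃ x : EuclideanSpace ℝ (Fin b), ‖x‖ = 1 ∧
    r = ‖(WithLp.equiv 2 (Fin b → ℝ)).symm (M.mulVec (WithLp.equiv 2 (Fin b → ℝ) x))‖}

lemma aux_T (n : ℕ) (r a : ℕ → ℝ) (hr : ∀ m, 0 ≤ r m) (ha : ∀ m, 0 ≤ a m)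
    (h : ∀ m, m < n → r m ≤ a m + ∑ k ∈ Finset.range m, r k) :
    ∀ m, m ≤ n → (∑ k ∈ Finset.range m, r k)^2 ≤
      ((4^m - 1)/3) * ∑ k ∈ Finset.range m, (a k)^2 := by
  intro m
  induction m with
  | zero => intro _; simp
  | succ m ih =>
    intro hm
    have ih := ih (by omega)
    have h1 := h m (by omega)
    rw [Finset.sum_range_succ, Finset.sum_range_succ]
    set T := ∑ k ∈ Finset.range m, r k with hT
    set A := ∑ k ∈ Finset.range m, (a k)^2 with hA
    have hT0 : 0 ≤ T := Finset.sum_nonneg fun i _ => hr i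
    have hA0 : 0 ≤ A := Finset.sum_nonneg fun i _ => sq_nonneg _
    have h4 : (1:ℝ) ≤ 4^m := one_le_pow₀ (by norm_num)
    set C : ℝ := (4^m - 1)/3 with hC
    have hC0 : 0 ≤ C := by rw [hC]; linarith
    have e : ((4:ℝ)^(m+1) - 1)/3 = 4*C+1 := by rw [hC]; ring
    rw [e]
    have s1 : (T + r m)^2 ≤ (2*T + a m)^2 :=
      pow_le_pow_left₀ (add_nonneg hT0 (hr m)) (by linarith) 2
    refine s1.trans ?_
    have key : 4 * T * a m ≤ 4 * C * (a m)^2 + A := by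
      apply abs_le_of_sq_le_sq' _ _ |>.2
      · nlinarith [mul_le_mul_of_nonneg_right ih (sq_nonneg (a m)), sq_nonneg (4 * C * (a m)^2 - A)]
      · positivity
    nlinarith

lemma aux_S (n : ℕ) (r a : ℕ → ℝ) (hr : ∀ m, 0 ≤ r m) (ha : ∀ m, 0 ≤ a m)
    (h : ∀ m, m < n → r m ≤ a m + ∑ k ∈ Finset.range m, r k) :
    ∑ k ∈ Finset.range n, (r k)^2 ≤
      ((4^n + 6 * n - 1)/9) * ∑ k ∈ Finset.range n, (a k)^2 := by
  have hT := aux_T n r a hr ha h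
  have h1 : ∀ m ∈ Finset.range n, (r m)^2 ≤
      ((4^m + 2)/3) * ∑ k ∈ Finset.range n, (a k)^2 := by
    intro m hm
    rw [Finset.mem_range] at hm
    have h2 := hT m hm.le
    have h3 := h m hm
    have hle : ∑ k ∈ Finset.range (m+1), (a k)^2 ≤ ∑ k ∈ Finset.range n, (a k)^2 :=
      Finset.sum_le_sum_of_subset_of_nonneg (Finset.range_mono (by omega))
        (fun i _ _ => sq_nonneg _)
    have h4 : (1:ℝ) ≤ 4^m := one_le_pow₀ (by norm_num)
    refine le_trans ?_ (mul_le_mul_of_nonneg_left hle (by positivity))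
    rw [Finset.sum_range_succ]
    set T := ∑ k ∈ Finset.range m, r k with hT
    set A := ∑ k ∈ Finset.range m, (a k)^2 with hA
    have hT0 : 0 ≤ T := Finset.sum_nonneg fun i _ => hr i
    have hA0 : 0 ≤ A := Finset.sum_nonneg fun i _ => sq_nonneg _
    have s1 : (r m)^2 ≤ (a m + T)^2 := pow_le_pow_left₀ (hr m) h3 2
    refine s1.trans ?_
    set C : ℝ := (4^m - 1)/3 with hC
    have hC0 : 0 ≤ C := by rw [hC]; linarith
    have e : ((4:ℝ)^m + 2)/3 = C+1 := by rw [hC]; ring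
    rw [e]
    have key : 2 * T * a m ≤ C * (a m)^2 + A := by
      apply abs_le_of_sq_le_sq' _ _ |>.2
      · nlinarith [mul_le_mul_of_nonneg_right h2 (sq_nonneg (a m)), sq_nonneg (C * (a m)^2 - A)]
      · positivity
    nlinarith
  refine (Finset.sum_le_sum h1).trans ?_
  rw [← Finset.sum_mul]
  apply le_of_eq
  congr 1
  clear h h1 hT
  induction n with
  | zero => simp
  | succ n ih => rw [Finset.sum_range_succ, ih]; push_cast; ring

lemma aux_back (b : ℕ) (M : Matrix (Fin b) (Fin b) ℝ) (hd : ∀ i, M i i = 1)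
    (hz : ∀ i j : Fin b, i < j → M i j = 0) (hM : ∀ i j, |M i j| ≤ 1) (x : Fin b → ℝ) :
    ∑ i, (x i)^2 ≤ ((4^b + 6 * b - 1)/9) * ∑ j, ((Mᵀ *ᵥ x) j)^2 := by
  set z := Mᵀ *ᵥ x with hzdef
  have hx : ∀ j, |x j| ≤ |z j| + ∑ i, if j < i then |x i| else 0 := by
    intro j
    have : z j = x j + ∑ i, if j < i then M i j * x i else 0 := by
      have e : x j = ∑ i, if i = j then x i else 0 := by simp
      rw [e, ← Finset.sum_add_distrib]
      simp only [hzdef, Matrix.mulVec, dotProduct, Matrix.transpose_apply]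
      refine Finset.sum_congr rfl fun i _ => ?_
      rcases lt_trichotomy i j with h | h | h
      · simp [hz i j h, h.ne, h.not_gt]
      · subst h; simp [hd]
      · simp [h, h.ne']
    have e : x j = z j - ∑ i, if j < i then M i j * x i else 0 := by rw [this]; ring
    calc |x j| = |z j - ∑ i, if j < i then M i j * x i else 0| := by rw [← e]
      _ ≤ |z j| + |∑ i, if j < i then M i j * x i else 0| := abs_sub _ _
      _ ≤ |z j| + ∑ i, if j < i then |x i| else 0 := by
        gcongr
        refine (Finset.abs_sum_le_sum_abs _ _).trans (Finset.sum_le_sum fun i _ => ?_)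
        split_ifs
        · rw [abs_mul]
          exact mul_le_of_le_one_left (abs_nonneg _) (hM i j)
        · simp
  let r : ℕ → ℝ := fun m => if h : m < b then |x (Fin.rev ⟨m, h⟩)| else 0
  let a : ℕ → ℝ := fun m => if h : m < b then |z (Fin.rev ⟨m, h⟩)| else 0
  have hS := aux_S b r a (fun m => by simp only [r]; split_ifs <;> simp)
    (fun m => by simp only [a]; split_ifs <;> simp) (by
      intro m hm
      have h1 := hx (Fin.rev ⟨m, hm⟩)
      have e1 : r m = |x (Fin.rev ⟨m, hm⟩)| := by simp [r, hm]
      have e2 : a m = |z (Fin.rev ⟨m, hm⟩)| := by simp [a, hm]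
      rw [e1, e2]
      refine h1.trans (le_of_eq ?_)
      congr 1
      rw [← Equiv.sum_comp Fin.revPerm]
      simp only [Fin.revPerm_apply, Fin.rev_lt_rev]
      have e3 : ∀ i : Fin b, (if i < (⟨m, hm⟩ : Fin b) then |x i.rev| else 0) =
          (fun k : ℕ => if k < m then r k else 0) (i : ℕ) := by
        intro i
        simp [r, Fin.lt_def]
      rw [Finset.sum_congr rfl fun i _ => e3 i,
        Fin.sum_univ_eq_sum_range (fun k : ℕ => if k < m then r k else 0), ← Finset.sum_filter]
      apply Finset.sum_congr _ fun _ _ => rfl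
      ext k; simp; omega)
  have c : ∀ y : Fin b → ℝ, ∑ i, (y i)^2 = ∑ k ∈ Finset.range b,
      ((if h : k < b then |y (Fin.rev ⟨k, h⟩)| else 0 : ℝ))^2 := by
    intro y
    rw [← Fin.sum_univ_eq_sum_range (fun k => ((if h : k < b then |y (Fin.rev ⟨k, h⟩)| else 0 : ℝ))^2),
      ← Equiv.sum_comp Fin.revPerm]
    simp
  rw [c x, c z]
  exact hS

lemma aux_frob (b : ℕ) (L : Matrix (Fin (2*b)) (Fin b) ℝ)
    (hLzero : ∀ (i : Fin (2*b)) (j : Fin b), (i : ℕ) < (j : ℕ) → L i j = 0)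
    (hLbdd : ∀ (i : Fin (2*b)) (j : Fin b), |L i j| ≤ 1) :
    ∑ j, ∑ i, (L i j)^2 ≤ (3 * (b:ℝ)^2 + b)/2 := by
  have h1 : ∀ j : Fin b, ∑ i, (L i j)^2 ≤ (fun k : ℕ => 2 * (b:ℝ) - k) (j : ℕ) := by
    intro j
    have : ∑ i, (L i j)^2 ≤ ∑ i : Fin (2*b), (fun k : ℕ => if k < (j:ℕ) then (0:ℝ) else 1) (i:ℕ) := by
      refine Finset.sum_le_sum fun i _ => ?_
      dsimp only
      split_ifs with h
      · simp [hLzero i j h]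
      · exact (sq_le_one_iff_abs_le_one _).2 (hLbdd i j)
    refine this.trans (le_of_eq ?_)
    rw [Fin.sum_univ_eq_sum_range (fun k : ℕ => if k < (j:ℕ) then (0:ℝ) else 1)]
    have hj := j.2
    obtain ⟨c, hc⟩ : ∃ c, 2 * b = (j:ℕ) + c := ⟨2*b - j, by omega⟩
    have hc' : 2 * (b:ℝ) = (j:ℕ) + c := by exact_mod_cast hc
    rw [hc, Finset.sum_range_add, hc']
    rw [Finset.sum_eq_zero]
    · simp
    · intro k hk; simp [Finset.mem_range.1 hk]
  refine (Finset.sum_le_sum fun j _ => h1 j).trans (le_of_eq ?_)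
  rw [Fin.sum_univ_eq_sum_range (fun k : ℕ => 2 * (b:ℝ) - k), Finset.sum_sub_distrib]
  have : ∀ n : ℕ, ∑ k ∈ Finset.range n, (k:ℝ) = n * (n - 1) / 2 := by
    intro n
    induction n with
    | zero => simp
    | succ n ih => rw [Finset.sum_range_succ, ih]; push_cast; ring
  rw [this]; simp; ring

lemma aux_U (b : ℕ) (L : Matrix (Fin (2*b)) (Fin b) ℝ) (U : Matrix (Fin b) (Fin b) ℝ)
    (h : (L * U)ᵀ * (L * U) = 1) (z : Fin b → ℝ) :
    ∑ j, (z j)^2 ≤ (∑ j, ∑ i, (L i j)^2) * ∑ j, ((Uᵀ *ᵥ z) j)^2 := by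
  have h1 : Uᵀ * (Lᵀ * (L * U)) = 1 := by
    rw [← h, Matrix.transpose_mul, Matrix.mul_assoc]
  have h2 := mul_eq_one_comm.1 h1
  set y := Uᵀ *ᵥ z with hy
  set w := (L * U) *ᵥ y with hw
  have hzw : z = Lᵀ *ᵥ w := by
    rw [hw, hy, Matrix.mulVec_mulVec, Matrix.mulVec_mulVec, h2, Matrix.one_mulVec]
  have hwy : ∑ i, (w i)^2 = ∑ j, (y j)^2 := by
    have : w ⬝ᵥ w = y ⬝ᵥ y := by
      conv_lhs => rw [hw]
      rw [Matrix.dotProduct_mulVec, Matrix.vecMul_mulVec, h, Matrix.vecMul_one]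
    simpa [dotProduct, sq] using this
  rw [← hwy, Finset.sum_mul]
  refine Finset.sum_le_sum fun j _ => ?_
  rw [hzw]
  have := Finset.sum_mul_sq_le_sq_mul_sq Finset.univ (fun i => L i j) w
  simpa only [Matrix.mulVec, dotProduct, Matrix.transpose_apply] using this

/-- Lemma 3.1: the singular value bound for the pivoted block rotation. -/
theorem pivoted_block_rotation_sigmaMin_bound (b : ℕ) (hb : 1 ≤ b)
    (Q : Matrix (Fin (2*b)) (Fin (2*b)) ℝ) (hQ : Qᵀ * Q = 1)
    (Q₁ : Matrix (Fin b) (Fin (2*b)) ℝ)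
    (hQ₁ : ∀ (i : Fin b) (j : Fin (2*b)), Q₁ i j = Q (Fin.castLE (by omega) i) j)
    (P : Matrix (Fin (2*b)) (Fin (2*b)) ℝ)
    (hP : ∃ σ : Equiv.Perm (Fin (2*b)), ∀ i j, P i j = if σ i = j then 1 else 0)
    (L : Matrix (Fin (2*b)) (Fin b) ℝ)
    (hLdiag : ∀ i : Fin b, L (Fin.castLE (by omega) i) i = 1)
    (hLzero : ∀ (i : Fin (2*b)) (j : Fin b), (i : ℕ) < (j : ℕ) → L i j = 0)
    (hLbdd : ∀ (i : Fin (2*b)) (j : Fin b), |L i j| ≤ 1)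
    (U : Matrix (Fin b) (Fin b) ℝ)
    (hU : ∀ i j : Fin b, (j : ℕ) < (i : ℕ) → U i j = 0)
    (hfact : Q₁ᵀ = Pᵀ * L * U)
    (Q11 : Matrix (Fin b) (Fin b) ℝ)
    (hQ11 : ∀ i j : Fin b,
      Q11 i j = (Q * Pᵀ) (Fin.castLE (by omega) i) (Fin.castLE (by omega) j)) :
    3 * Real.sqrt 2 * ((3 * (b:ℝ)^2 + b) * (4 ^ b + 6 * b - 1)) ^ (-(1/2) : ℝ) ≤
      sigmaMin Q11 := by
  obtain ⟨σ, hσ⟩ := hP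
  have hPP : P * Pᵀ = 1 := by
    ext i j
    simp [Matrix.mul_apply, hσ, Matrix.one_apply]
  have hLU : P * Q₁ᵀ = L * U := by
    rw [hfact, ← Matrix.mul_assoc, ← Matrix.mul_assoc, hPP, Matrix.one_mul]
  have hPP' : Pᵀ * P = 1 := mul_eq_one_comm.1 hPP
  have hQQ : Q * Qᵀ = 1 := mul_eq_one_comm.1 hQ
  have hQ1 : Q₁ * Q₁ᵀ = 1 := by
    ext i j
    have := congrFun (congrFun hQQ (Fin.castLE (by omega) i)) (Fin.castLE (by omega) j)
    simpa [Matrix.mul_apply, hQ₁, Matrix.one_apply] using this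
  have horth : (L * U)ᵀ * (L * U) = 1 := by
    rw [← hLU, Matrix.transpose_mul, Matrix.transpose_transpose, Matrix.mul_assoc,
      ← Matrix.mul_assoc Pᵀ, hPP', Matrix.one_mul, hQ1]
  let M : Matrix (Fin b) (Fin b) ℝ := fun i j => L (Fin.castLE (by omega) i) j
  have hQM : Q11 = Uᵀ * Mᵀ := by
    ext i j
    have h1 := congrFun (congrFun hLU (Fin.castLE (by omega) j)) i
    rw [hQ11]
    simp only [Matrix.mul_apply, Matrix.transpose_apply, hQ₁] at h1 ⊢
    rw [Finset.sum_congr rfl fun k _ => mul_comm _ _, h1]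
    exact Finset.sum_congr rfl fun k _ => mul_comm _ _
  have hb' : (1:ℝ) ≤ b := by exact_mod_cast hb
  have h4 : (1:ℝ) ≤ 4^b := one_le_pow₀ (by norm_num)
  set F : ℝ := 3 * (b:ℝ)^2 + b with hF
  set S : ℝ := 4^b + 6 * b - 1 with hS
  have hF0 : 0 < F := by positivity
  have hS0 : 0 < S := by rw [hS]; linarith
  apply le_csInf
  · exact ⟨_, EuclideanSpace.single ⟨0, hb⟩ 1, by simp, rfl⟩
  · rintro r ⟨x, hx, rfl⟩
    have hx2 : ∑ i, (x i)^2 = 1 := by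
      have := EuclideanSpace.real_norm_sq_eq x
      rw [hx] at this
      simpa using this.symm
    have k1 := aux_back b M hLdiag (fun i j h => hLzero _ _ h) (fun i j => hLbdd _ _) x
    have k2 := aux_U b L U horth (Mᵀ *ᵥ x)
    have k3 := aux_frob b L hLzero hLbdd
    rw [Matrix.mulVec_mulVec, ← hQM] at k2
    rw [hx2] at k1
    set N := ‖(WithLp.equiv 2 (Fin b → ℝ)).symm (Q11.mulVec (WithLp.equiv 2 (Fin b → ℝ) x))‖ with hN
    have hN2 : N^2 = ∑ j, ((Q11 *ᵥ (x : Fin b → ℝ)) j)^2 := by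
      rw [hN, EuclideanSpace.real_norm_sq_eq]
      rfl
    rw [← hN2] at k2
    have k4 : 1 ≤ (S/9) * (F/2 * N^2) := by
      refine k1.trans (mul_le_mul_of_nonneg_left (k2.trans ?_) (by positivity))
      exact mul_le_mul_of_nonneg_right k3 (sq_nonneg _)
    rw [Real.rpow_neg (by positivity), ← Real.sqrt_eq_rpow, ← div_eq_mul_inv,
      div_le_iff₀ (Real.sqrt_pos.2 (by positivity))]
    apply abs_le_of_sq_le_sq' _ _ |>.2
    · rw [mul_pow, mul_pow, Real.sq_sqrt (by norm_num), Real.sq_sqrt (by positivity)]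
      nlinarith
    · positivity
end

section
/- Let b ≥ 1 and let L ∈ ℝ^{b×b} be unit lower triangular with |L(i,j)| ≤ 1 for all i > j. Then L is invertible and the squared Frobenius norm of its inverse satisfies ‖L⁻¹‖_F² ≤ (4^b + 6b − 1)/9; hence the spectral norm satisfies ‖L⁻¹‖₂ ≤ (1/3)·(4^b + 6b − 1)^{1/2}. -/
open Matrix

/-- The spectral norm of a real matrix: the operator norm of the induced linear map
between Euclidean spaces. -/
noncomputable def specNorm {m n : ℕ} (M : Matrix (Fin m) (Fin n) ℝ) : ℝ :=
  ‖LinearMap.toContinuousLinearMap (Matrix.toEuclideanLin M)‖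

/-- The entrywise bound for the inverse: `0` above the diagonal, `1` on it and
`2^(i-j-1)` below it. -/
def entryBound : ℕ → ℕ → ℝ
  | 0, 0 => 1
  | 0, _ + 1 => 0
  | i + 1, 0 => 2 ^ i
  | i + 1, j + 1 => entryBound i j

lemma entryBound_rec (i j : ℕ) :
    (if i = j then (1 : ℝ) else 0) + ∑ k ∈ Finset.range i, entryBound k j = entryBound i j := by
  induction i generalizing j with
  | zero => cases j <;> simp [entryBound]
  | succ i ih =>
    cases j with
    | zero =>
      rw [Finset.sum_range_succ']
      simp only [entryBound]
      rw [geom_sum_eq (by norm_num)]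
      simp
      ring
    | succ j =>
      rw [Finset.sum_range_succ']
      simp only [entryBound]
      rw [← ih j]
      simp

lemma entryBound_row (i b : ℕ) (h : i < b) :
    ∑ j ∈ Finset.range b, entryBound i j ^ 2 = (4 ^ i + 2) / 3 := by
  induction i generalizing b with
  | zero =>
    obtain ⟨b, rfl⟩ := Nat.exists_eq_add_of_lt h
    rw [zero_add, Finset.sum_range_succ']
    simp [entryBound]
    norm_num
  | succ i ih =>
    obtain ⟨b, rfl⟩ : ∃ c, b = c + 1 := ⟨b - 1, by omega⟩
    rw [Finset.sum_range_succ']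
    simp only [entryBound]
    rw [ih b (by omega), ← pow_mul, mul_comm i 2, pow_mul, pow_succ]
    norm_num
    ring

lemma specNorm_le_of_sq {n : ℕ} (M : Matrix (Fin n) (Fin n) ℝ) :
    specNorm M ≤ Real.sqrt (∑ i, ∑ j, (M i j) ^ 2) := by
  unfold specNorm
  refine ContinuousLinearMap.opNorm_le_bound _ (Real.sqrt_nonneg _) fun x => ?_
  rw [EuclideanSpace.norm_eq, EuclideanSpace.norm_eq, ← Real.sqrt_mul (by positivity)]
  apply Real.sqrt_le_sqrt
  rw [Finset.sum_mul]
  refine Finset.sum_le_sum fun i _ => ?_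
  simp only [Real.norm_eq_abs, sq_abs]
  exact Finset.sum_mul_sq_le_sq_mul_sq Finset.univ (fun j => M i j) (fun j => x j)

lemma entry_le {b : ℕ} (L X : Matrix (Fin b) (Fin b) ℝ) (hLX : L * X = 1)
    (hdiag : ∀ i, L i i = 1)
    (hzero : ∀ i j : Fin b, (i : ℕ) < (j : ℕ) → L i j = 0)
    (hbdd : ∀ i j : Fin b, (j : ℕ) < (i : ℕ) → |L i j| ≤ 1) (j : Fin b) :
    ∀ (m : ℕ) (i : Fin b), (i : ℕ) = m → |X i j| ≤ entryBound i j := by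
  intro m
  induction m using Nat.strong_induction_on with
  | _ m ih =>
  rintro i rfl
  have h1 : X i j = (if (i : ℕ) = j then (1 : ℝ) else 0)
      - ∑ k : Fin b, (if (k : ℕ) < i then L i k * X k j else 0) := by
    have h2 := congrFun (congrFun hLX i) j
    rw [Matrix.mul_apply, Matrix.one_apply] at h2
    have h3 : ∑ k, L i k * X k j
        = ∑ k : Fin b, ((if (k : ℕ) < i then L i k * X k j else 0)
          + (if k = i then X i j else 0)) := by
      refine Finset.sum_congr rfl fun k _ => ?_
      rcases lt_trichotomy (k : ℕ) i with h | h | h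
      · have : k ≠ i := fun e => by simp [e] at h
        simp [h, this]
      · have : k = i := Fin.ext h
        subst this
        simp [hdiag]
      · have : k ≠ i := fun e => by simp [e] at h
        simp [hzero i k h, this]
    rw [h3, Finset.sum_add_distrib, Finset.sum_ite_eq'] at h2
    simp only [Finset.mem_univ, if_true, Fin.ext_iff] at h2
    linarith
  have h4 : |∑ k : Fin b, (if (k : ℕ) < i then L i k * X k j else 0)|
      ≤ ∑ k ∈ Finset.range i, entryBound k j := by
    calc _ ≤ ∑ k : Fin b, |if (k : ℕ) < i then L i k * X k j else 0| :=
          Finset.abs_sum_le_sum_abs _ _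
      _ ≤ ∑ k : Fin b, (if (k : ℕ) < i then entryBound k j else 0) := by
          refine Finset.sum_le_sum fun k _ => ?_
          split_ifs with h
          · rw [abs_mul]
            have := ih k h k rfl
            calc _ ≤ 1 * |X k j| := mul_le_mul_of_nonneg_right (hbdd i k h) (abs_nonneg _)
              _ ≤ _ := by rwa [one_mul]
          · simp
      _ = ∑ k ∈ Finset.range b, (if k < (i : ℕ) then entryBound k j else 0) :=
          Fin.sum_univ_eq_sum_range (fun k => if k < (i : ℕ) then entryBound k j else 0) b
      _ = _ := by
          rw [← Finset.sum_filter]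
          congr 1
          ext k
          have := i.2
          simp only [Finset.mem_filter, Finset.mem_range]
          omega
  rw [← entryBound_rec, h1]
  refine (abs_sub _ _).trans (add_le_add ?_ h4)
  split_ifs <;> simp

/-- A unit lower triangular matrix `L` with subdiagonal entries bounded by `1` is invertible,
with `‖L⁻¹‖_F² ≤ (4^b + 6b − 1)/9` and hence `‖L⁻¹‖₂ ≤ (1/3)·(4^b + 6b − 1)^{1/2}`. -/
theorem unit_lower_triangular_inv_norm_bound (b : ℕ) (hb : 1 ≤ b)
    (L : Matrix (Fin b) (Fin b) ℝ)
    (hdiag : ∀ i, L i i = 1)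
    (hzero : ∀ i j : Fin b, (i : ℕ) < (j : ℕ) → L i j = 0)
    (hbdd : ∀ i j : Fin b, (j : ℕ) < (i : ℕ) → |L i j| ≤ 1) :
    IsUnit L.det ∧
    (∑ i, ∑ j, (L⁻¹ i j) ^ 2) ≤ ((4:ℝ) ^ b + 6 * b - 1) / 9 ∧
    specNorm L⁻¹ ≤ (1 / 3) * Real.sqrt ((4:ℝ) ^ b + 6 * b - 1) := by
  have hdet : L.det = 1 := by
    rw [Matrix.det_of_isLowerTriangular L (fun i j h => hzero i j (by simpa using h))]
    simp [hdiag]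
  have hu : IsUnit L.det := by simp [hdet]
  have hF : (∑ i, ∑ j, (L⁻¹ i j) ^ 2) ≤ ((4:ℝ) ^ b + 6 * b - 1) / 9 := by
    calc _ ≤ ∑ i : Fin b, ((4 : ℝ) ^ (i : ℕ) + 2) / 3 := by
          refine Finset.sum_le_sum fun i _ => ?_
          rw [← entryBound_row i b i.2,
            ← Fin.sum_univ_eq_sum_range (fun j => entryBound i j ^ 2) b]
          refine Finset.sum_le_sum fun j _ => ?_
          rw [← sq_abs]
          exact pow_le_pow_left₀ (abs_nonneg _)
            (entry_le L L⁻¹ (Matrix.mul_nonsing_inv L hu) hdiag hzero hbdd j i i rfl) 2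
      _ = _ := by
          rw [Fin.sum_univ_eq_sum_range (fun i => ((4 : ℝ) ^ i + 2) / 3) b,
            ← Finset.sum_div, Finset.sum_add_distrib, geom_sum_eq (by norm_num)]
          simp
          ring
  refine ⟨hu, hF, (specNorm_le_of_sq _).trans ((Real.sqrt_le_sqrt hF).trans (le_of_eq ?_))⟩
  rw [Real.sqrt_div' _ (by norm_num), show (9 : ℝ) = 3 ^ 2 by norm_num,
    Real.sqrt_sq (by norm_num)]
  ring
end

section
/- Let A ∈ ℝ^{n×n} be symmetric, let i ≠ j be indices, and let Q ∈ ℝ^{n×n} be an orthogonal matrix that agrees with the identity matrix outside the 2×2 principal submatrix on rows and columns {i,j} (that is, Q(k,l) = δ_{kl} whenever k ∉ {i,j} or l ∉ {i,j}). Set B = Qᵀ A Q. If B(i,j) = 0, then the off-diagonal norm satisfies Ξ(B)² = Ξ(A)² − 2·A(i,j)². -/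
open Matrix

/-- The squared off-diagonal norm `Ξ(A)² = Σ_{i≠j} A(i,j)²`. -/
noncomputable def offDiagSq {n : ℕ} (A : Matrix (Fin n) (Fin n) ℝ) : ℝ :=
  ∑ i, ∑ j, if i ≠ j then (A i j) ^ 2 else 0

/-- The off-diagonal norm `Ξ(A)`. -/
noncomputable def offXi {n : ℕ} (A : Matrix (Fin n) (Fin n) ℝ) : ℝ :=
  Real.sqrt (offDiagSq A)

theorem offDiagSq_eq_trace {n : ℕ} (M : Matrix (Fin n) (Fin n) ℝ) :
    offDiagSq M = (Mᵀ * M).trace - ∑ k, M k k ^ 2 := by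
  have h : (Mᵀ * M).trace = ∑ k, ∑ l, M k l ^ 2 := by
    rw [Finset.sum_comm]
    simp [Matrix.trace, Matrix.mul_apply, pow_two]
  rw [h, offDiagSq, ← Finset.sum_sub_distrib]
  refine Finset.sum_congr rfl fun k _ => ?_
  rw [eq_sub_iff_add_eq]
  have : M k k ^ 2 = ∑ l, if k = l then M k l ^ 2 else 0 := by simp
  rw [this, ← Finset.sum_add_distrib]
  refine Finset.sum_congr rfl fun l _ => ?_
  by_cases hkl : k = l <;> simp [hkl]

theorem offXi_sq {n : ℕ} (M : Matrix (Fin n) (Fin n) ℝ) : offXi M ^ 2 = offDiagSq M := by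
  refine Real.sq_sqrt (Finset.sum_nonneg fun k _ => Finset.sum_nonneg fun l _ => ?_)
  split_ifs <;> positivity

theorem sum_two {n : ℕ} {i j : Fin n} (hij : i ≠ j) (f : Fin n → ℝ)
    (hf : ∀ k, k ≠ i → k ≠ j → f k = 0) : ∑ k, f k = f i + f j := by
  rw [← Finset.sum_pair hij]
  symm
  refine Finset.sum_subset (Finset.subset_univ _) fun k _ hk => ?_
  simp only [Finset.mem_insert, Finset.mem_singleton, not_or] at hk
  exact hf k hk.1 hk.2

/-- A Jacobi rotation supported on rows/columns `{i,j}` that annihilates the `(i,j)` entry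
reduces the squared off-diagonal norm by exactly `2·A(i,j)²`. -/
theorem jacobi_rotation_offdiag_decrease (n : ℕ)
    (A : Matrix (Fin n) (Fin n) ℝ) (hA : Aᵀ = A)
    (i j : Fin n) (hij : i ≠ j)
    (Q : Matrix (Fin n) (Fin n) ℝ) (hQ : Qᵀ * Q = 1)
    (hQsupp : ∀ k l : Fin n, (k ∉ ({i, j} : Set (Fin n)) ∨ l ∉ ({i, j} : Set (Fin n))) →
      Q k l = if k = l then 1 else 0)
    (B : Matrix (Fin n) (Fin n) ℝ) (hB : B = Qᵀ * A * Q)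
    (hzero : B i j = 0) :
    offXi B ^ 2 = offXi A ^ 2 - 2 * A i j ^ 2 := by
  have hQ' : Q * Qᵀ = 1 := mul_eq_one_comm.mp hQ
  have hz : ∀ k, k ≠ i → k ≠ j → ∀ l, Q k l = if k = l then 1 else 0 := fun k h1 h2 l =>
    hQsupp k l (Or.inl (by simp [h1, h2]))
  have hz' : ∀ k, k ≠ i → k ≠ j → ∀ l, Q l k = if l = k then 1 else 0 := fun k h1 h2 l =>
    hQsupp l k (Or.inr (by simp [h1, h2]))
  have hzi : ∀ k, k ≠ i → k ≠ j → Q k i = 0 ∧ Q k j = 0 ∧ Q i k = 0 ∧ Q j k = 0 := by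
    intro k h1 h2
    simp [hz k h1 h2, hz' k h1 h2, h1, h2, h1.symm, h2.symm]
  have hBi : ∀ k l, B k l = ∑ q, (∑ p, Q p k * A p q) * Q q l := by
    intro k l
    rw [hB]
    simp [Matrix.mul_apply]
  have hBe : ∀ k l, (k = i ∨ k = j) → (l = i ∨ l = j) → B k l =
      (Q i k * A i i + Q j k * A j i) * Q i l + (Q i k * A i j + Q j k * A j j) * Q j l := by
    intro k l hk hl
    rw [hBi, sum_two hij, sum_two hij, sum_two hij]
    · intro m h1 h2
      rcases hk with rfl | rfl <;> simp [hzi m h1 h2]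
    · intro m h1 h2
      rcases hk with rfl | rfl <;> simp [hzi m h1 h2]
    · intro m h1 h2
      rcases hl with rfl | rfl <;> simp [hzi m h1 h2]
  have hBd : ∀ k, k ≠ i → k ≠ j → B k k = A k k := by
    intro k h1 h2
    rw [hBi]
    simp [hz' k h1 h2]
  have hrow : ∀ k l, (k = i ∨ k = j) →
      Q k i * Q l i + Q k j * Q l j = if k = l then 1 else 0 := by
    intro k l hk
    have h := congrFun (congrFun hQ' k) l
    rw [Matrix.mul_apply, Matrix.one_apply, sum_two hij] at h
    · simpa using h
    · intro m h1 h2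
      rcases hk with rfl | rfl <;> simp [hzi m h1 h2]
  have r1 := hrow i i (Or.inl rfl)
  have r2 := hrow i j (Or.inl rfl)
  have r3 := hrow j j (Or.inr rfl)
  simp only [hij, if_true, if_false] at r1 r2 r3
  have hs : A j i = A i j := congrFun (congrFun hA i) j
  have eii := hBe i i (Or.inl rfl) (Or.inl rfl)
  have ejj := hBe j j (Or.inr rfl) (Or.inr rfl)
  have eij := hBe i j (Or.inl rfl) (Or.inr rfl)
  rw [hs] at eii ejj eij
  have htr : B i i + B j j = A i i + A j j := by
    rw [eii, ejj]
    linear_combination A i i * r1 + 2 * A i j * r2 + A j j * r3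
  have hd : (Q i i * Q j j - Q i j * Q j i) ^ 2 = 1 := by
    linear_combination (Q j i ^ 2 + Q j j ^ 2) * r1 + r3 - (Q i i * Q j i + Q i j * Q j j) * r2
  have hdet : B i i * B j j - B i j ^ 2 = A i i * A j j - A i j ^ 2 := by
    rw [eii, ejj, eij]
    linear_combination (A i i * A j j - A i j ^ 2) * hd
  have hkey : B i i ^ 2 + B j j ^ 2 = A i i ^ 2 + A j j ^ 2 + 2 * A i j ^ 2 := by
    rw [hzero] at hdet
    linear_combination (B i i + B j j + A i i + A j j) * htr - 2 * hdet
  have hdiag : ∑ k, (B k k ^ 2 - A k k ^ 2) = 2 * A i j ^ 2 := by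
    rw [sum_two hij]
    · linear_combination hkey
    · intro k h1 h2
      rw [hBd k h1 h2, sub_self]
  have htrace : (Bᵀ * B).trace = (Aᵀ * A).trace := by
    have : Bᵀ * B = Qᵀ * (Aᵀ * A * Q) := by
      rw [hB]
      simp only [Matrix.transpose_mul, Matrix.transpose_transpose, Matrix.mul_assoc]
      rw [← Matrix.mul_assoc Q Qᵀ, hQ', Matrix.one_mul]
    rw [this, Matrix.trace_mul_comm, Matrix.mul_assoc, hQ', Matrix.mul_one]
  rw [Finset.sum_sub_distrib] at hdiag
  rw [offXi_sq, offXi_sq, offDiagSq_eq_trace, offDiagSq_eq_trace, htrace]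
  linear_combination -hdiag
end

section
/- Let A, B ∈ ℝ^{n×n}, let D₁, D₃ ∈ ℝ^{n×n} be diagonal matrices, and let M ∈ ℝ^{3n×3n} be the block matrix with block rows ( D₁ A 0 ), ( 0 I B ), ( 0 0 D₃ ). Fix an index i and set λ = D₃(i,i). Assume λ ≠ 1 and λ ≠ D₁(j,j) for every j (so that λI − D₁ is invertible). Then the vector v ∈ ℝ^{3n} with blocks v₁ = (λ−1)^{-1}(λI − D₁)^{-1} A B e_i, v₂ = (λ−1)^{-1} B e_i, v₃ = e_i satisfies M v = λ v, and v ≠ 0; in particular λ is an eigenvalue of M with eigenvector v. -/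
open Matrix

/-- The `3n × 3n` block matrix with block rows `(D₁ A 0)`, `(0 I B)`, `(0 0 D₃)`. -/
noncomputable def tripleBlock {n : ℕ} (D₁ A B D₃ : Matrix (Fin n) (Fin n) ℝ) :
    Matrix (Fin n ⊕ (Fin n ⊕ Fin n)) (Fin n ⊕ (Fin n ⊕ Fin n)) ℝ :=
  fun r c =>
    match r, c with
    | .inl j, .inl k => D₁ j k
    | .inl j, .inr (.inl k) => A j k
    | .inl _, .inr (.inr _) => 0
    | .inr (.inl _), .inl _ => 0
    | .inr (.inl j), .inr (.inl k) => (1 : Matrix (Fin n) (Fin n) ℝ) j k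
    | .inr (.inl j), .inr (.inr k) => B j k
    | .inr (.inr _), .inl _ => 0
    | .inr (.inr _), .inr (.inl _) => 0
    | .inr (.inr j), .inr (.inr k) => D₃ j k

/-- The reduction of matrix multiplication to the nonsymmetric eigenvalue problem:
for `λ = D₃(i,i)` distinct from `1` and from all diagonal entries of `D₁`, the vector with
blocks `(λ−1)⁻¹(λI − D₁)⁻¹ A B e_i`, `(λ−1)⁻¹ B e_i`, `e_i` is an eigenvector of the
block matrix `M` for the eigenvalue `λ`. -/
theorem tripleBlock_eigenpair (n : ℕ)
    (A B D₁ D₃ : Matrix (Fin n) (Fin n) ℝ)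
    (hD₁ : ∀ j k : Fin n, j ≠ k → D₁ j k = 0)
    (hD₃ : ∀ j k : Fin n, j ≠ k → D₃ j k = 0)
    (i : Fin n) (lam : ℝ) (hlam : lam = D₃ i i)
    (hne1 : lam ≠ 1) (hneD₁ : ∀ j : Fin n, lam ≠ D₁ j j)
    (v : Fin n ⊕ (Fin n ⊕ Fin n) → ℝ)
    (hv : v = Sum.elim
      ((lam - 1)⁻¹ • ((lam • (1 : Matrix (Fin n) (Fin n) ℝ) - D₁)⁻¹ * A * B).mulVec
        (Pi.single i 1))
      (Sum.elim ((lam - 1)⁻¹ • B.mulVec (Pi.single i 1)) (Pi.single i 1))) :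
    (tripleBlock D₁ A B D₃).mulVec v = lam • v ∧ v ≠ 0 := by
  have hdet : IsUnit (lam • (1 : Matrix (Fin n) (Fin n) ℝ) - D₁).det := by
    have hd : lam • (1 : Matrix (Fin n) (Fin n) ℝ) - D₁
        = Matrix.diagonal (fun j => lam - D₁ j j) := by
      ext j k
      by_cases h : j = k
      · subst h; simp
      · simp [h, hD₁ j k h]
    rw [hd, Matrix.det_diagonal, isUnit_iff_ne_zero]
    exact Finset.prod_ne_zero_iff.mpr fun j _ => sub_ne_zero.mpr (hneD₁ j)
  have hl : lam - 1 ≠ 0 := sub_ne_zero.mpr hne1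
  obtain ⟨x, hx⟩ : ∃ x, x = ((lam • (1 : Matrix (Fin n) (Fin n) ℝ) - D₁)⁻¹ * A * B).mulVec
        (Pi.single i 1) := ⟨_, rfl⟩
  obtain ⟨b, hb⟩ : ∃ b, b = B.mulVec (Pi.single i (1 : ℝ)) := ⟨_, rfl⟩
  have key : lam • x - D₁.mulVec x = A.mulVec b := by
    have h : (lam • (1 : Matrix (Fin n) (Fin n) ℝ) - D₁).mulVec x = A.mulVec b := by
      rw [hx, hb, Matrix.mulVec_mulVec, Matrix.mulVec_mulVec, Matrix.mul_assoc _ A B,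
        Matrix.mul_nonsing_inv_cancel_left _ _ hdet]
    rwa [Matrix.sub_mulVec, Matrix.smul_mulVec, Matrix.one_mulVec] at h
  rw [← hx, ← hb] at hv
  have hM : tripleBlock D₁ A B D₃ = Matrix.fromBlocks D₁ (Matrix.fromCols A 0) 0
      (Matrix.fromBlocks 1 B 0 D₃) := by
    ext r c
    rcases r with r | r | r <;> rcases c with c | c | c <;> rfl
  have h3 : D₃.mulVec (Pi.single i 1) = lam • (Pi.single i (1 : ℝ) : Fin n → ℝ) := by
    ext j
    by_cases h : j = i
    · subst h; simp [hlam]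
    · simp [h, hD₃ j i h]
  refine ⟨?_, ?_⟩
  · rw [hv, hM, Matrix.fromBlocks_mulVec]
    simp only [Sum.elim_comp_inl, Sum.elim_comp_inr, Matrix.fromBlocks_mulVec,
      Matrix.fromCols_mulVec, Matrix.zero_mulVec, Matrix.one_mulVec, zero_add, add_zero,
      Matrix.mulVec_smul, h3, ← hb, ← key]
    ext r
    rcases r with r | r | r
    · simp; ring
    · simp; field_simp; ring
    · simp
  · intro h0
    have := congrFun h0 (Sum.inr (Sum.inr i))
    simp [hv] at this
end

section
/- Let 0 < f < 1, let n ≥ 1 and t ≥ 1 be real numbers, let k be a natural number, and set S = Σ_{i=1}^{k+1} f^i. Then 2^{1+S} · n^{f^{k+2}} ≤ t if and only if f^{k+2} · ((1−f)·log₂(n) − 1) ≤ (1−f)·log₂(t) − 1. -/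
/-- The recursion-depth equivalence (equations (4.12)–(4.13)): with
`S = Σ_{i=1}^{k+1} f^i`, one has `2^{1+S}·n^{f^{k+2}} ≤ t` iff
`f^{k+2}·((1−f)·log₂ n − 1) ≤ (1−f)·log₂ t − 1`. -/
theorem recursion_threshold_iff (f : ℝ) (hf0 : 0 < f) (hf1 : f < 1)
    (n t : ℝ) (hn : 1 ≤ n) (ht : 1 ≤ t) (k : ℕ) (S : ℝ)
    (hS : S = ∑ i ∈ Finset.Icc 1 (k + 1), f ^ i) :
    (2 : ℝ) ^ (1 + S) * n ^ (f ^ (k + 2)) ≤ t ↔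
      f ^ (k + 2) * ((1 - f) * Real.logb 2 n - 1) ≤ (1 - f) * Real.logb 2 t - 1 := by
  have hgeo : ∀ m : ℕ, (1 - f) * (1 + ∑ i ∈ Finset.Icc 1 m, f ^ i) = 1 - f ^ (m + 1) := by
    intro m
    induction m with
    | zero => simp
    | succ m ih =>
      rw [Finset.sum_Icc_succ_top (by omega), ← add_assoc, mul_add, ih]
      ring
  have h1 : (1 - f) * (1 + S) = 1 - f ^ (k + 2) := by
    rw [hS]
    exact hgeo (k + 1)
  have hn0 : 0 < n := by linarith
  have ht0 : 0 < t := by linarith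
  have hA : 0 < (2 : ℝ) ^ (1 + S) := Real.rpow_pos_of_pos two_pos _
  have hB : 0 < n ^ (f ^ (k + 2)) := Real.rpow_pos_of_pos hn0 _
  have hf : 0 < 1 - f := by linarith
  rw [← Real.logb_le_logb (b := 2) (by norm_num) (mul_pos hA hB) ht0,
    Real.logb_mul hA.ne' hB.ne', Real.logb_rpow (by norm_num) (by norm_num),
    Real.logb_rpow_eq_mul_logb_of_pos hn0, ← mul_le_mul_iff_right₀ hf, mul_add, h1]
  constructor <;> intro h <;> linarith
end

section
/- Let 2 < ω₀ < 3 and let (f_i)_{i≥1} be a sequence of real numbers with 0 < f_i < 1 for all i, satisfying f_{i+1} > 1 − (1−f_i)/((3−ω₀)·f_i) for every i. Define P_j = Π_{i=1}^{j} f_i. Then the sequence j ↦ 2 + P_{j+1} − (3−ω₀)·P_{j+2} is strictly decreasing in j. -/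
/-- Variable-log-block-size recursive Jacobi: if the log block sizes `f_i ∈ (0,1)` satisfy
`f_{i+1} > 1 − (1−f_i)/((3−ω₀)f_i)`, then the exponents
`2 + Π_{i=1}^{j+1} f_i − (3−ω₀)·Π_{i=1}^{j+2} f_i` are strictly decreasing in `j`. -/
theorem varying_log_block_exponents_decrease (ω₀ : ℝ) (hω2 : 2 < ω₀) (hω3 : ω₀ < 3)
    (f : ℕ → ℝ) (hf : ∀ i, 1 ≤ i → 0 < f i ∧ f i < 1)
    (hcond : ∀ i, 1 ≤ i → f (i + 1) > 1 - (1 - f i) / ((3 - ω₀) * f i)) :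
    StrictAnti (fun j : ℕ =>
      2 + (∏ i ∈ Finset.Icc 1 (j + 1), f i) -
        (3 - ω₀) * ∏ i ∈ Finset.Icc 1 (j + 2), f i) := by
  apply strictAnti_nat_of_succ_lt
  intro j
  have h1 : ∏ i ∈ Finset.Icc 1 (j + 2), f i
      = (∏ i ∈ Finset.Icc 1 (j + 1), f i) * f (j + 2) :=
    Finset.prod_Icc_succ_top (by omega) f
  have h2 : ∏ i ∈ Finset.Icc 1 (j + 3), f i
      = (∏ i ∈ Finset.Icc 1 (j + 2), f i) * f (j + 3) :=
    Finset.prod_Icc_succ_top (by omega) f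
  have hP : 0 < ∏ i ∈ Finset.Icc 1 (j + 1), f i :=
    Finset.prod_pos fun i hi => (hf i (Finset.mem_Icc.mp hi).1).1
  have hc := hcond (j + 2) (by omega)
  have ha := (hf (j + 2) (by omega)).1
  have hca : 0 < (3 - ω₀) * f (j + 2) := mul_pos (by linarith) ha
  have key : 1 - f (j + 3) < (1 - f (j + 2)) / ((3 - ω₀) * f (j + 2)) := by
    have hc' : f (j + 3) > 1 - (1 - f (j + 2)) / ((3 - ω₀) * f (j + 2)) := hc
    linarith
  rw [lt_div_iff₀ hca] at key
  change 2 + (∏ i ∈ Finset.Icc 1 (j + 2), f i) - (3 - ω₀) * ∏ i ∈ Finset.Icc 1 (j + 3), f i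
    < 2 + (∏ i ∈ Finset.Icc 1 (j + 1), f i) - (3 - ω₀) * ∏ i ∈ Finset.Icc 1 (j + 2), f i
  rw [h2, h1]
  have := mul_lt_mul_of_pos_left key hP
  linarith
end
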